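/- arXiv:1212.2400 — 4 statements merged into one kernel-verified Lean document; each statement's English description precedes it below -/
import Mathlib

section
/- A state operator T on a complex separable Hilbert space H is an extreme point of the convex set of all state operators (i.e., whenever T = w T₁ + (1−w) T₂ with state operators T₁, T₂ and 0 < w < 1, necessarily T = T₁ = T₂) if and only if there exists a unit vector ψ ∈ H such that T is the rank-one orthogonal projection |ψ⟩⟨ψ| onto the span of ψ. -/
open scoped ComplexInnerProductSpace

/-- The trace of a (trace-class) operator computed along a Hilbert basis. -/
noncomputable def trAlong {H : Type*} [NormedAddCommGroup H] [InnerProductSpace ℂ H]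
    {ι : Type*} (b : HilbertBasis ι ℂ H) (A : H →L[ℂ] H) : ℂ :=
  ∑' i, ⟪b i, A (b i)⟫

/-- A state operator: a positive trace-class operator with trace one. -/
def IsStateOperator {H : Type*} [NormedAddCommGroup H] [InnerProductSpace ℂ H]
    [CompleteSpace H] {ι : Type*} (b : HilbertBasis ι ℂ H) (T : H →L[ℂ] H) : Prop :=
  T.IsPositive ∧ Summable (fun i => ⟪b i, T (b i)⟫) ∧ trAlong b T = 1

section StateHelpers

variable {H : Type*} [NormedAddCommGroup H] [InnerProductSpace ℂ H]

/-- Cauchy-Schwarz for the semi-inner product of a positive operator. -/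
lemma pos_cauchy {T : H →L[ℂ] H} (hT : T.IsPositive) (x y : H) :
    ‖⟪T x, y⟫‖ ^ 2 ≤ (⟪T x, x⟫).re * (⟪T y, y⟫).re := by
  let c : PreInnerProductSpace.Core ℂ H :=
    { inner := fun u v => ⟪T u, v⟫
      conj_inner_symm := fun u v => by
        change (starRingEnd ℂ) ⟪T v, u⟫ = ⟪T u, v⟫
        rw [inner_conj_symm, hT.inner_left_eq_inner_right]
      re_inner_nonneg := fun u => hT.re_inner_nonneg_left u
      add_left := fun u v z => by
        change ⟪T (u + v), z⟫ = ⟪T u, z⟫ + ⟪T v, z⟫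
        rw [map_add, inner_add_left]
      smul_left := fun u v r => by
        change ⟪T (r • u), v⟫ = (starRingEnd ℂ) r * ⟪T u, v⟫
        rw [map_smul, inner_smul_left] }
  have h := @InnerProductSpace.Core.inner_mul_inner_self_le ℂ H _ _ _ c x y
  change ‖⟪T x, y⟫‖ * ‖⟪T y, x⟫‖ ≤ (⟪T x, x⟫).re * (⟪T y, y⟫).re at h
  rw [hT.inner_left_eq_inner_right y x, norm_inner_symm y (T x)] at h
  rw [sq]
  exact h

lemma pos_eq_zero {T : H →L[ℂ] H} (hT : T.IsPositive) {x : H} (hx : (⟪T x, x⟫).re = 0) :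
    T x = 0 := by
  have h := pos_cauchy hT x (T x)
  rw [hx, zero_mul] at h
  have h0 : ‖⟪T x, T x⟫‖ = 0 := by
    have := norm_nonneg ⟪T x, T x⟫
    nlinarith
  exact inner_self_eq_zero.1 (norm_eq_zero.1 h0)

/-- The operator `|η⟩⟨η|`. -/
noncomputable def ketbra (η : H) : H →L[ℂ] H := (innerSL ℂ η).smulRight η

lemma ketbra_apply (η x : H) : ketbra η x = ⟪η, x⟫ • η := by
  simp [ketbra]

lemma ketbra_quad (η x : H) : ⟪ketbra η x, x⟫ = ((‖⟪η, x⟫‖ ^ 2 : ℝ) : ℂ) := by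
  rw [ketbra_apply, inner_smul_left, RCLike.conj_mul]
  norm_cast

lemma ketbra_symm (η x y : H) : ⟪ketbra η x, y⟫ = ⟪x, ketbra η y⟫ := by
  rw [ketbra_apply, ketbra_apply, inner_smul_left, inner_smul_right, inner_conj_symm, mul_comm]

lemma ketbra_pos (η : H) : (ketbra η).IsPositive := by
  refine ⟨fun x y => ketbra_symm η x y, fun x => ?_⟩
  rw [ContinuousLinearMap.reApplyInnerSelf_apply, ketbra_quad]
  simp only [RCLike.re_to_complex, Complex.ofReal_re]
  positivity

lemma ketbra_hasSum {ι : Type*} (b : HilbertBasis ι ℂ H) (η : H) :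
    HasSum (fun i => ⟪b i, ketbra η (b i)⟫) ((‖η‖ ^ 2 : ℝ) : ℂ) := by
  have h := b.hasSum_inner_mul_inner η η
  rw [inner_self_eq_norm_sq_to_K] at h
  have hf : (fun i => ⟪b i, ketbra η (b i)⟫) = fun i => ⟪η, b i⟫ * ⟪b i, η⟫ := by
    funext i
    rw [ketbra_apply, inner_smul_right]
  rw [hf, Complex.ofReal_pow]
  exact h

lemma ketbra_smul (r : ℝ) (η : H) : ketbra ((r : ℂ) • η) = ((r ^ 2 : ℝ) : ℂ) • ketbra η := by
  ext x
  simp only [ketbra_apply, smul_apply, inner_smul_left, smul_smul,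
    Complex.conj_ofReal]
  congr 1
  push_cast
  ring

variable {ι : Type*} (b : HilbertBasis ι ℂ H)

lemma pos_trace_zero {T : H →L[ℂ] H} (hT : T.IsPositive)
    (h : HasSum (fun i => ⟪b i, T (b i)⟫) 0) : T = 0 := by
  have hre : HasSum (fun i => (⟪b i, T (b i)⟫).re) 0 := by
    simpa using Complex.hasSum_re h
  have h0 := (hasSum_zero_iff_of_nonneg (fun i => hT.re_inner_nonneg_right (b i))).1 hre
  have hb : ∀ i, T (b i) = 0 := fun i => by
    apply pos_eq_zero hT
    rw [hT.inner_left_eq_inner_right]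
    exact congrFun h0 i
  refine ContinuousLinearMap.ext_on (s := Set.range b) ?_ ?_
  · exact Submodule.dense_iff_topologicalClosure_eq_top.2 b.dense_span
  · rintro _ ⟨i, rfl⟩
    simp [hb i]

lemma exists_sub_pos {T : H →L[ℂ] H} (hT : T.IsPositive) (h0 : T ≠ 0) :
    ∃ η : H, η ≠ 0 ∧ (T - ketbra η).IsPositive := by
  obtain ⟨x, hx⟩ : ∃ x, T x ≠ 0 := by
    by_contra! h
    exact h0 (ContinuousLinearMap.ext h)
  have hd : 0 < (⟪T x, x⟫).re :=
    lt_of_le_of_ne (hT.re_inner_nonneg_left x) fun h => hx (pos_eq_zero hT h.symm)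
  set d := (⟪T x, x⟫).re with hdd
  refine ⟨(((√d)⁻¹ : ℝ) : ℂ) • T x, ?_, ?_⟩
  · refine smul_ne_zero ?_ hx
    have := Real.sqrt_pos.2 hd
    exact_mod_cast (inv_pos.2 this).ne'
  · rw [ketbra_smul, inv_pow, Real.sq_sqrt hd.le]
    refine ⟨fun u v => ?_, fun u => ?_⟩
    · have h1 := hT.inner_left_eq_inner_right u v
      have h2 := ketbra_symm (T x) u v
      simp [inner_sub_left, inner_sub_right, inner_smul_left, inner_smul_right, h1, h2]
    · have h1 := pos_cauchy hT x u
      rw [ContinuousLinearMap.reApplyInnerSelf_apply, sub_apply,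
        smul_apply, inner_sub_left, inner_smul_left, ketbra_quad,
        Complex.conj_ofReal, ← Complex.ofReal_mul, map_sub]
      simp only [RCLike.re_to_complex, Complex.ofReal_re]
      rw [sub_nonneg, inv_mul_le_iff₀ hd]
      exact h1

lemma isState_iff [CompleteSpace H] (T : H →L[ℂ] H) :
    IsStateOperator b T ↔ T.IsPositive ∧ HasSum (fun i => ⟪b i, T (b i)⟫) 1 := by
  unfold IsStateOperator trAlong
  refine and_congr_right fun _ => ⟨fun h => h.2 ▸ h.1.hasSum, fun h => ⟨h.summable, h.tsum_eq⟩⟩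

lemma ketbra_extreme_aux [CompleteSpace H] {ψ : H} (hψ : ‖ψ‖ = 1) {a c : ℝ} (ha : 0 < a)
    (hc : 0 < c) {A B : H →L[ℂ] H} (hA : IsStateOperator b A) (hB : IsStateOperator b B)
    (h : ketbra ψ = (a : ℂ) • A + (c : ℂ) • B) : ketbra ψ = A := by
  rw [isState_iff] at hA hB
  have hker : ∀ x, ⟪ψ, x⟫ = 0 → A x = 0 := fun x hx => by
    apply pos_eq_zero hA.1
    have h1 : ⟪ketbra ψ x, x⟫ = 0 := by simp [ketbra_quad, hx]
    rw [h] at h1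
    have h2 := congrArg Complex.re h1
    simp only [add_apply, smul_apply, inner_add_left,
      inner_smul_left, Complex.conj_ofReal, Complex.add_re, Complex.re_ofReal_mul,
      Complex.zero_re] at h2
    have hAx : 0 ≤ (⟪A x, x⟫).re := hA.1.re_inner_nonneg_left x
    have hBx : 0 ≤ (⟪B x, x⟫).re := hB.1.re_inner_nonneg_left x
    nlinarith [mul_nonneg ha.le hAx, mul_nonneg hc.le hBx]
  have hψψ : ⟪ψ, ψ⟫ = 1 := by
    rw [inner_self_eq_norm_sq_to_K, hψ]; simp
  have hdec : ∀ x, A x = ⟪ψ, x⟫ • A ψ := fun x => by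
    have := hker (x - ⟪ψ, x⟫ • ψ) (by rw [inner_sub_right, inner_smul_right, hψψ]; simp)
    rwa [map_sub, map_smul, sub_eq_zero] at this
  have hAψ : A ψ = ⟪ψ, A ψ⟫ • ψ := by
    refine ext_inner_left ℂ fun v => ?_
    rw [← hA.1.inner_left_eq_inner_right, hdec v, inner_smul_left, inner_smul_right,
      inner_conj_symm, hA.1.inner_left_eq_inner_right, mul_comm]
  have hAk : A = ⟪ψ, A ψ⟫ • ketbra ψ := by
    ext x
    rw [hdec x, smul_apply, ketbra_apply, smul_comm, ← hAψ]
  have hs := (ketbra_hasSum b ψ).mul_left ⟪ψ, A ψ⟫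
  have h1 : (1 : ℂ) = ⟪ψ, A ψ⟫ := by
    have h2 := hA.2
    rw [hAk] at h2
    simp only [smul_apply, inner_smul_right] at h2 hs
    have := h2.unique (by simpa [hψψ] using (ketbra_hasSum b ψ).mul_left (⟪ψ, A ψ⟫))
    simpa [hψ] using this
  rw [hAk, ← h1, one_smul]

lemma extreme_imp [CompleteSpace H] (T : H →L[ℂ] H) (hT : IsStateOperator b T)
    (hext : ∀ (w : ℝ) (T₁ T₂ : H →L[ℂ] H), IsStateOperator b T₁ → IsStateOperator b T₂ →
        0 < w → w < 1 → T = (w : ℂ) • T₁ + (1 - (w : ℂ)) • T₂ → T = T₁ ∧ T = T₂) :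
    ∃ ψ : H, ‖ψ‖ = 1 ∧ T = ketbra ψ := by
  have hT' := (isState_iff b T).1 hT
  have h0 : T ≠ 0 := by
    rintro rfl
    have hz : HasSum (fun i => ⟪b i, (0 : H →L[ℂ] H) (b i)⟫) 0 := by
      simp [hasSum_zero]
    exact one_ne_zero (hT'.2.unique hz)
  obtain ⟨η, hη, hpos⟩ := exists_sub_pos hT'.1 h0
  have hn : 0 < ‖η‖ := norm_pos_iff.2 hη
  have hsum : HasSum (fun i => ⟪b i, (T - ketbra η) (b i)⟫) ((1 - ‖η‖ ^ 2 : ℝ) : ℂ) := by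
    have := hT'.2.sub (ketbra_hasSum b η)
    simpa [inner_sub_right] using this
  set w := ‖η‖ ^ 2 with hw
  have hw0 : 0 < w := by positivity
  have hw1 : 0 ≤ 1 - w := by
    have := Complex.hasSum_re hsum
    rw [Complex.ofReal_re] at this
    exact this.nonneg fun i => hpos.re_inner_nonneg_right (b i)
  set ψ : H := ((‖η‖⁻¹ : ℝ) : ℂ) • η with hψ
  have hψ1 : ‖ψ‖ = 1 := by
    rw [hψ, norm_smul, Complex.norm_real, norm_inv, norm_norm, inv_mul_cancel₀ hn.ne']
  have hηψ : ketbra η = (w : ℂ) • ketbra ψ := by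
    rw [hψ, ketbra_smul, smul_smul, ← Complex.ofReal_mul, inv_pow, mul_inv_cancel₀ hw0.ne']
    simp
  refine ⟨ψ, hψ1, ?_⟩
  have hψs : IsStateOperator b (ketbra ψ) :=
    (isState_iff b _).2 ⟨ketbra_pos ψ, by simpa [hψ1] using ketbra_hasSum b ψ⟩
  rcases hw1.eq_or_lt with h1 | h1
  · rw [← h1] at hsum
    have := pos_trace_zero b hpos (by simpa using hsum)
    have hw1 : w = 1 := by linarith
    rw [sub_eq_zero.1 this, hηψ, hw1]
    simp
  · have hne : ((1 - w : ℝ) : ℂ) ≠ 0 := by exact_mod_cast h1.ne'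
    refine (hext w (ketbra ψ) ((((1 - w)⁻¹ : ℝ) : ℂ) • (T - ketbra η)) hψs ?_ hw0
      (by linarith) ?_).1
    · refine (isState_iff b _).2 ⟨hpos.smul_of_nonneg ?_, ?_⟩
      · exact_mod_cast (inv_pos.2 h1).le
      · have := hsum.mul_left (((1 - w)⁻¹ : ℝ) : ℂ)
        rw [← Complex.ofReal_mul, inv_mul_cancel₀ h1.ne', Complex.ofReal_one] at this
        simpa only [smul_apply, inner_smul_right] using this
    · rw [← hηψ, smul_smul, ← Complex.ofReal_one, ← Complex.ofReal_sub, ← Complex.ofReal_mul,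
        mul_inv_cancel₀ h1.ne', Complex.ofReal_one, one_smul]
      abel

end StateHelpers

/-- A state operator is an extreme point of the convex set of state operators
iff it is a rank-one orthogonal projection `|ψ⟩⟨ψ|` onto the span of a unit vector `ψ`. -/
theorem isExtremal_state_iff_rankOne_projection
    {H : Type*} [NormedAddCommGroup H] [InnerProductSpace ℂ H] [CompleteSpace H]
    {ι : Type*} [Countable ι] (b : HilbertBasis ι ℂ H)
    (T : H →L[ℂ] H) (hT : IsStateOperator b T) :
    (∀ (w : ℝ) (T₁ T₂ : H →L[ℂ] H), IsStateOperator b T₁ → IsStateOperator b T₂ →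
        0 < w → w < 1 → T = (w : ℂ) • T₁ + (1 - (w : ℂ)) • T₂ → T = T₁ ∧ T = T₂) ↔
      ∃ ψ : H, ‖ψ‖ = 1 ∧ T = (innerSL ℂ ψ).smulRight ψ := by
  constructor
  · exact extreme_imp b T hT
  · rintro ⟨ψ, hψ, rfl⟩ w T₁ T₂ h₁ h₂ hw0 hw1 h
    have h' : ketbra ψ = (w : ℂ) • T₁ + ((1 - w : ℝ) : ℂ) • T₂ := by
      push_cast
      exact h
    refine ⟨ketbra_extreme_aux b hψ hw0 (sub_pos.2 hw1) h₁ h₂ h', ?_⟩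
    rw [add_comm] at h'
    exact ketbra_extreme_aux b hψ (sub_pos.2 hw1) hw0 h₂ h₁ h'
end

section
/- Let H be a complex separable Hilbert space. For every nonempty face W of the set of state operators on H there exists a unique orthogonal projection P on H such that W = {T : T is a state operator and P T P = T}. Moreover this correspondence between nonempty faces and orthogonal projections is an order isomorphism: for nonempty faces W, W′ with associated projections P, P′, one has W′ ⊆ W if and only if P′ ≤ P. -/
open scoped ComplexInnerProductSpace

/-- Trace norm `tr √(A*A)` computed along a Hilbert basis. -/
noncomputable def traceNormAlong {H : Type*} [NormedAddCommGroup H] [InnerProductSpace ℂ H]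
    [CompleteSpace H] {ι : Type*} (b : HilbertBasis ι ℂ H) (A : H →L[ℂ] H) : ℝ :=
  ∑' i, (⟪b i, (CFC.sqrt (A * A)) (b i)⟫).re

/-- A face of the set of state operators: a trace-norm (sequentially) closed subset of the
state operators that is closed under convex combinations and contains all convex components
of any of its elements. -/
def IsFace {H : Type*} [NormedAddCommGroup H] [InnerProductSpace ℂ H] [CompleteSpace H]
    {ι : Type*} (b : HilbertBasis ι ℂ H) (W : Set (H →L[ℂ] H)) : Prop :=
  (∀ T ∈ W, IsStateOperator b T) ∧
  (∀ T : H →L[ℂ] H, IsStateOperator b T → ∀ u : ℕ → H →L[ℂ] H, (∀ n, u n ∈ W) →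
      Filter.Tendsto (fun n => traceNormAlong b (u n - T)) Filter.atTop (nhds 0) → T ∈ W) ∧
  (∀ T₁ ∈ W, ∀ T₂ ∈ W, ∀ w : ℝ, 0 ≤ w → w ≤ 1 →
      (w : ℂ) • T₁ + (1 - (w : ℂ)) • T₂ ∈ W) ∧
  (∀ (T₁ T₂ : H →L[ℂ] H) (w : ℝ), IsStateOperator b T₁ → IsStateOperator b T₂ →
      0 < w → w < 1 → (w : ℂ) • T₁ + (1 - (w : ℂ)) • T₂ ∈ W → T₁ ∈ W ∧ T₂ ∈ W)


set_option linter.unusedSectionVars false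
set_option linter.unusedSimpArgs false
set_option linter.unusedVariables false
namespace FaceProj
open InnerProductSpace

section
variable {H : Type*} [NormedAddCommGroup H] [InnerProductSpace ℂ H]

/-- quadratic form -/
noncomputable def qf (A : H →L[ℂ] H) (x : H) : ℝ := (⟪x, A x⟫).re

theorem qf_add (A B : H →L[ℂ] H) (x : H) : qf (A + B) x = qf A x + qf B x := by
  simp [qf, inner_add_right]

theorem qf_sub (A B : H →L[ℂ] H) (x : H) : qf (A - B) x = qf A x - qf B x := by
  simp [qf, inner_sub_right]

theorem qf_smul (t : ℝ) (A : H →L[ℂ] H) (x : H) : qf ((t : ℂ) • A) x = t * qf A x := by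
  simp [qf, inner_smul_right]

theorem qf_rk (v x : H) : qf (rankOne ℂ v v) x = ‖⟪v, x⟫‖ ^ 2 := by
  simp only [qf, rankOne_apply, inner_smul_right]
  rw [← inner_conj_symm x v, Complex.mul_conj, Complex.normSq_eq_norm_sq]
  norm_cast

theorem qf_sum {α : Type*} (F : Finset α) (A : α → H →L[ℂ] H) (x : H) :
    qf (∑ i ∈ F, A i) x = ∑ i ∈ F, qf (A i) x := by
  simp [qf, inner_sum]

variable [CompleteSpace H]

theorem pos_of_qf {A : H →L[ℂ] H} (hA : IsSelfAdjoint A) (h : ∀ x, 0 ≤ qf A x) :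
    A.IsPositive := by
  rw [ContinuousLinearMap.isPositive_def']
  refine ⟨hA, fun x => ?_⟩
  have := h x
  rw [ContinuousLinearMap.reApplyInnerSelf_apply, inner_re_symm]
  simpa [qf] using this

theorem qf_nonneg {A : H →L[ℂ] H} (hA : A.IsPositive) (x : H) : 0 ≤ qf A x :=
  hA.re_inner_nonneg_right x

theorem inner_eq_qf {A : H →L[ℂ] H} (hA : A.IsPositive) (x : H) : ⟪x, A x⟫ = (qf A x : ℂ) := by
  have := hA.inner_nonneg_right x
  apply Complex.ext
  · simp [qf]
  · simpa using (Complex.le_def.1 this).2.symm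

theorem sqrt_pos (A : H →L[ℂ] H) : (CFC.sqrt A).IsPositive := by
  rw [← ContinuousLinearMap.nonneg_iff_isPositive]; exact CFC.sqrt_nonneg A

theorem sqrt_mul {A : H →L[ℂ] H} (hA : A.IsPositive) : CFC.sqrt A * CFC.sqrt A = A := by
  rw [← ContinuousLinearMap.nonneg_iff_isPositive] at hA
  exact CFC.sqrt_mul_sqrt_self A hA

theorem qf_eq_norm_sqrt {A : H →L[ℂ] H} (hA : A.IsPositive) (x : H) :
    qf A x = ‖CFC.sqrt A x‖ ^ 2 := by
  have h1 : A x = CFC.sqrt A (CFC.sqrt A x) := by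
    conv_lhs => rw [← sqrt_mul hA]
    rfl
  rw [qf, h1, ← (sqrt_pos A).inner_left_eq_inner_right, inner_self_eq_norm_sq_to_K]
  norm_cast

/-- Cauchy Schwarz -/
theorem cs {A : H →L[ℂ] H} (hA : A.IsPositive) (x y : H) :
    ‖⟪A x, y⟫‖ ^ 2 ≤ qf A x * qf A y := by
  have h1 : A x = CFC.sqrt A (CFC.sqrt A x) := by
    conv_lhs => rw [← sqrt_mul hA]
    rfl
  rw [qf_eq_norm_sqrt hA, qf_eq_norm_sqrt hA, h1, (sqrt_pos A).inner_left_eq_inner_right,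
    ← mul_pow]
  gcongr
  exact norm_inner_le_norm _ _

variable {ι : Type*} (b : HilbertBasis ι ℂ H)

theorem parseval (v : H) : HasSum (fun i => ‖⟪v, b i⟫‖ ^ 2) (‖v‖ ^ 2) := by
  have h := b.hasSum_inner_mul_inner v v
  have h2 := Complex.hasSum_re h
  convert h2 using 1
  · ext i
    rw [← inner_conj_symm (b i) v, Complex.mul_conj, Complex.normSq_eq_norm_sq]
    norm_cast
  · rw [inner_self_eq_norm_sq_to_K]; norm_cast

theorem parseval_enn (v : H) : ∑' i, ENNReal.ofReal (‖⟪v, b i⟫‖ ^ 2) = ENNReal.ofReal (‖v‖ ^ 2) := by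
  rw [← (parseval b v).tsum_eq, ENNReal.ofReal_tsum_of_nonneg (fun _ => by positivity)
    (parseval b v).summable]

theorem hs_adjoint (X : H →L[ℂ] H) :
    ∑' i, ENNReal.ofReal (‖X (b i)‖ ^ 2) =
      ∑' i, ENNReal.ofReal (‖ContinuousLinearMap.adjoint X (b i)‖ ^ 2) := by
  simp_rw [← parseval_enn b]
  rw [ENNReal.tsum_comm]
  refine tsum_congr fun j => tsum_congr fun i => ?_
  rw [ContinuousLinearMap.adjoint_inner_left, ← norm_inner_symm]

/-- positive with trace `t` -/
def HT (A : H →L[ℂ] H) (t : ℝ) : Prop := A.IsPositive ∧ HasSum (fun i => qf A (b i)) t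

variable {b}

theorem state_iff {T : H →L[ℂ] H} : IsStateOperator b T ↔ HT b T 1 := by
  constructor
  · rintro ⟨h, hs, h1⟩
    refine ⟨h, ?_⟩
    have := hs.hasSum
    rw [show ∑' i, ⟪b i, T (b i)⟫ = 1 from h1] at this
    simpa [qf] using Complex.hasSum_re this
  · rintro ⟨h, hs⟩
    have h3 : HasSum (fun i => ⟪b i, T (b i)⟫) 1 := by
      have := Complex.hasSum_ofReal.2 hs
      simp_rw [inner_eq_qf h]
      simpa using this
    exact ⟨h, h3.summable, h3.tsum_eq⟩

theorem HT.add {A B : H →L[ℂ] H} {s t : ℝ} (hA : HT b A s) (hB : HT b B t) :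
    HT b (A + B) (s + t) :=
  ⟨hA.1.add hB.1, by simp_rw [qf_add]; exact hA.2.add hB.2⟩

theorem HT.smul {A : H →L[ℂ] H} {s t : ℝ} (ht : 0 ≤ t) (hA : HT b A s) :
    HT b ((t : ℂ) • A) (t * s) :=
  ⟨hA.1.smul_of_nonneg (by exact_mod_cast ht), by simp_rw [qf_smul]; exact hA.2.mul_left t⟩

theorem HT.sub {A B : H →L[ℂ] H} {s t : ℝ} (hA : HT b A s) (hB : HT b B t)
    (h : ∀ x, qf B x ≤ qf A x) : HT b (A - B) (s - t) :=
  ⟨pos_of_qf (hA.1.isSelfAdjoint.sub hB.1.isSelfAdjoint)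
    (fun x => by rw [qf_sub]; linarith [h x]), by simp_rw [qf_sub]; exact hA.2.sub hB.2⟩

theorem HT.nonneg {A : H →L[ℂ] H} {s : ℝ} (hA : HT b A s) : 0 ≤ s :=
  hA.2.nonneg fun i => qf_nonneg hA.1 _

theorem HT.unique {A : H →L[ℂ] H} {s t : ℝ} (hA : HT b A s) (hB : HT b A t) : s = t :=
  hA.2.unique hB.2

variable (b) in
theorem HT.zero : HT b (0 : H →L[ℂ] H) 0 :=
  ⟨ContinuousLinearMap.isPositive_zero, by simpa [qf] using hasSum_zero⟩

variable (b) in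
theorem HT.rk (v : H) : HT b (rankOne ℂ v v) (‖v‖ ^ 2) :=
  ⟨isPositive_rankOne_self v, by simp_rw [qf_rk]; exact parseval b v⟩

theorem HT.of_le {A B : H →L[ℂ] H} {t : ℝ} (hA : HT b A t) (hB : B.IsPositive)
    (h : ∀ x, qf B x ≤ qf A x) : ∃ s, HT b B s := by
  have : Summable (fun i => qf B (b i)) :=
    Summable.of_nonneg_of_le (fun i => qf_nonneg hB _) (fun i => h _) hA.2.summable
  exact ⟨_, hB, this.hasSum⟩

theorem HT.eq_zero {A : H →L[ℂ] H} (hA : HT b A 0) : A = 0 := by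
  have h := (hasSum_zero_iff_of_nonneg (fun i => qf_nonneg hA.1 (b i))).1 hA.2
  have h2 : ∀ i, A (b i) = 0 := by
    intro i
    have h3 := congrFun h i
    have := cs hA.1 (b i) (A (b i))
    simp only [Pi.zero_apply] at h3
    rw [h3, zero_mul] at this
    have h4 : ‖⟪A (b i), A (b i)⟫‖ = 0 := by
      have := norm_nonneg ⟪A (b i), A (b i)⟫
      nlinarith
    simpa using h4
  ext x
  have := (b.hasSum_repr x).mapL A
  simp only [map_smul, h2, smul_zero] at this
  simpa using this.unique hasSum_zero

theorem HT.conj {A E : H →L[ℂ] H} {t : ℝ} (hA : HT b A t) (hE : IsSelfAdjoint E)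
    (hn : ∀ x, ‖E x‖ ≤ ‖x‖) : ∃ s ≤ t, HT b (E * A * E) s := by
  set R := CFC.sqrt A with hR
  have hRs : ContinuousLinearMap.adjoint R = R := (sqrt_pos A).isSelfAdjoint
  have hEs : ContinuousLinearMap.adjoint E = E := hE
  have hq : ∀ x, qf (E * A * E) x = ‖(R * E) x‖ ^ 2 := by
    intro x
    have : qf (E * A * E) x = qf A (E x) := by
      have h9 : (E * A * E) x = E (A (E x)) := rfl
      rw [qf, qf, h9, ← ContinuousLinearMap.adjoint_inner_left E, hEs]
    rw [this, qf_eq_norm_sqrt hA.1]; rfl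
  have hpos : (E * A * E).IsPositive := by
    have := hA.1.conj_adjoint E
    rw [hEs] at this
    exact this
  have hsum : ∑' i, ENNReal.ofReal (‖(R * E) (b i)‖ ^ 2) ≤ ENNReal.ofReal t := by
    rw [hs_adjoint]
    have : ContinuousLinearMap.adjoint (R * E) = E * R := by
      have := ContinuousLinearMap.adjoint_comp R E
      rw [hRs, hEs] at this
      exact this
    rw [this, ← hA.2.tsum_eq, ENNReal.ofReal_tsum_of_nonneg (fun i => qf_nonneg hA.1 _)
      hA.2.summable]
    refine ENNReal.tsum_le_tsum fun i => ENNReal.ofReal_le_ofReal ?_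
    rw [qf_eq_norm_sqrt hA.1]
    gcongr
    exact hn _
  have hne : ∑' i, ENNReal.ofReal (‖(R * E) (b i)‖ ^ 2) ≠ ⊤ :=
    ne_top_of_le_ne_top ENNReal.ofReal_ne_top hsum
  have hs : Summable (fun i => ‖(R * E) (b i)‖ ^ 2) := by
    have := ENNReal.summable_toReal hne
    refine this.congr fun i => ENNReal.toReal_ofReal (by positivity)
  refine ⟨∑' i, ‖(R * E) (b i)‖ ^ 2, ?_, hpos, by simp_rw [hq]; exact hs.hasSum⟩
  rw [← ENNReal.ofReal_tsum_of_nonneg (fun _ => by positivity) hs] at hsum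
  exact (ENNReal.ofReal_le_ofReal_iff hA.nonneg).1 hsum

theorem traceNorm_sub_le {A B : H →L[ℂ] H} {s t : ℝ} (hA : HT b A s) (hB : HT b B t) :
    traceNormAlong b (A - B) ≤ s + t := by
  have hD : IsSelfAdjoint (A - B) := hA.1.isSelfAdjoint.sub hB.1.isSelfAdjoint
  set D := A - B with hDdef
  have habs : CFC.sqrt (D * D) = D⁺ + D⁻ := by
    rw [CFC.posPart_add_negPart D hD, CFC.abs, hD.star_eq]
  have hsub := CFC.posPart_sub_negPart D hD
  have hpn := CFC.negPart_mul_posPart D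
  have hp0 : 0 ≤ D⁺ := CFC.posPart_nonneg D
  have hn0 : 0 ≤ D⁻ := CFC.negPart_nonneg D
  have hpsa : IsSelfAdjoint D⁺ := hp0.isSelfAdjoint
  have hnsa : IsSelfAdjoint D⁻ := hn0.isSelfAdjoint
  generalize D⁺ = p at *
  generalize D⁻ = n at *
  let U : Submodule ℂ H := p.range.topologicalClosure
  have : CompleteSpace U := (Submodule.isClosed_topologicalClosure _).completeSpace_coe
  let E : H →L[ℂ] H := U.starProjection
  have hE : IsStarProjection E := isStarProjection_starProjection
  have hEn : ∀ x, ‖E x‖ ≤ ‖x‖ := fun x => U.norm_starProjection_apply_le x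
  have hE' : IsStarProjection (1 - E) := hE.one_sub
  have hEn' : ∀ x, ‖(1 - E) x‖ ≤ ‖x‖ := fun x => by
    have : (1 - E) = Uᗮ.starProjection := by
      rw [Submodule.starProjection_orthogonal']
    rw [this]
    exact Uᗮ.norm_starProjection_apply_le x
  have hEp : E * p = p := by
    ext x
    exact Submodule.starProjection_eq_self_iff.2
      (Submodule.le_topologicalClosure _ (LinearMap.mem_range_self _ x))
  have hnE : n * E = 0 := by
    ext x
    have h1 : U ≤ n.ker := by
      refine Submodule.topologicalClosure_minimal _ ?_ n.isClosed_ker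
      rintro _ ⟨y, rfl⟩
      exact DFunLike.congr_fun hpn y
    exact h1 (Submodule.starProjection_apply_mem U x)
  have hpE : p * E = p := by
    have := congrArg star hEp
    rwa [star_mul, hpsa.star_eq, hE.isSelfAdjoint.star_eq] at this
  have hEnn : E * n = 0 := by
    have := congrArg star hnE
    rwa [star_mul, hnsa.star_eq, hE.isSelfAdjoint.star_eq, star_zero] at this
  obtain ⟨s', hs', h1⟩ := hA.conj hE.isSelfAdjoint hEn
  obtain ⟨t', ht', h2⟩ := hB.conj hE'.isSelfAdjoint hEn'
  obtain ⟨s'', -, h3⟩ := hB.conj hE.isSelfAdjoint hEn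
  obtain ⟨t'', -, h4⟩ := hA.conj hE'.isSelfAdjoint hEn'
  have ep : p = E * A * E - E * B * E := by
    have : E * A * E - E * B * E = E * D * E := by rw [hDdef]; noncomm_ring
    rw [this, ← hsub, mul_sub, hEp, hEnn, sub_zero, hpE]
  have en : n = (1 - E) * B * (1 - E) - (1 - E) * A * (1 - E) := by
    have : (1 - E) * B * (1 - E) - (1 - E) * A * (1 - E) = - ((1 - E) * D * (1 - E)) := by
      rw [hDdef]; noncomm_ring
    have h8 : (1 - E) * (p - n) = -n := by
      rw [mul_sub, sub_mul, sub_mul, hEp, hEnn]; simp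
    rw [this, ← hsub, h8, mul_sub, neg_mul n E, hnE]
    simp
  have hle : ∀ x, qf (CFC.sqrt (D * D)) x ≤ qf (E * A * E + (1 - E) * B * (1 - E)) x := by
    intro x
    rw [habs, qf_add, qf_add, ep, en, qf_sub, qf_sub]
    have := qf_nonneg h3.1 x
    have := qf_nonneg h4.1 x
    linarith
  have h5 := h1.add h2
  obtain ⟨r, hr⟩ := h5.of_le (sqrt_pos (D * D)) hle
  have h6 : traceNormAlong b D = r := hr.2.tsum_eq
  have h7 : r ≤ s' + t' := hasSum_le (fun i => hle _) hr.2 h5.2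
  linarith

theorem traceNorm_nonneg (A : H →L[ℂ] H) : 0 ≤ traceNormAlong b A :=
  tsum_nonneg fun i => qf_nonneg (sqrt_pos (A * A)) (b i)


/-- cone generated by `W` -/
def Cn (W : Set (H →L[ℂ] H)) (A : H →L[ℂ] H) : Prop :=
  ∃ t : ℝ, 0 ≤ t ∧ ∃ T ∈ W, A = (t : ℂ) • T

variable {W : Set (H →L[ℂ] H)}

theorem Cn.ht (hW : IsFace b W) {A : H →L[ℂ] H} (h : Cn W A) : ∃ t, HT b A t := by
  obtain ⟨t, ht, T, hT, rfl⟩ := h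
  exact ⟨_, (state_iff.1 (hW.1 T hT)).smul ht⟩

theorem Cn.mem (hW : IsFace b W) {A : H →L[ℂ] H} (h : Cn W A) {t : ℝ} (hA : HT b A t)
    (ht : 0 < t) : ((t⁻¹ : ℝ) : ℂ) • A ∈ W := by
  obtain ⟨s, hs, T, hT, rfl⟩ := h
  have h1 := ((state_iff.1 (hW.1 T hT)).smul hs).unique hA
  rw [mul_one] at h1
  subst h1
  rw [smul_smul, ← Complex.ofReal_mul, inv_mul_cancel₀ ht.ne']
  simpa using hT

theorem Cn.smul {A : H →L[ℂ] H} (h : Cn W A) {t : ℝ} (ht : 0 ≤ t) : Cn W ((t : ℂ) • A) := by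
  obtain ⟨s, hs, T, hT, rfl⟩ := h
  exact ⟨t * s, mul_nonneg ht hs, T, hT, by rw [smul_smul, Complex.ofReal_mul]⟩

theorem Cn.add (hW : IsFace b W) {A B : H →L[ℂ] H} (hA : Cn W A) (hB : Cn W B) :
    Cn W (A + B) := by
  obtain ⟨s, hs, S, hS, rfl⟩ := hA
  obtain ⟨t, ht, T, hT, rfl⟩ := hB
  rcases (add_nonneg hs ht).eq_or_lt with h | h
  · have h1 : s = 0 := by linarith
    have h2 : t = 0 := by linarith
    exact ⟨0, le_rfl, S, hS, by simp [h1, h2]⟩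
  · refine ⟨s + t, h.le, _, hW.2.2.1 S hS T hT (s / (s + t)) (by positivity)
      ((div_le_one h).2 (by linarith)), ?_⟩
    have h1 : ((s : ℂ) + t) ≠ 0 := by exact_mod_cast h.ne'
    rw [smul_add, smul_smul, smul_smul]
    push_cast
    congr 2 <;> field_simp
    ring

theorem Cn.of_le (hW : IsFace b W) {A B : H →L[ℂ] H} (hA : Cn W A) (hB : B.IsPositive)
    (h : ∀ x, qf B x ≤ qf A x) : Cn W B := by
  obtain ⟨a, hAt⟩ := hA.ht hW
  obtain ⟨s, hs⟩ := hAt.of_le hB h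
  obtain ⟨t, ht, T, hT, rfl⟩ := hA
  have hTs := state_iff.1 (hW.1 T hT)
  rcases hs.nonneg.eq_or_lt with h0 | h0
  · subst h0
    exact ⟨0, le_rfl, T, hT, by simp [hs.eq_zero]⟩
  have hst : s ≤ t := by
    have h1 := hTs.smul ht
    rw [mul_one] at h1
    exact hasSum_le (fun i => h _) hs.2 h1.2
  have htp : 0 < t := by linarith
  set w : ℝ := s / (t + s) with hw
  have hw0 : 0 < w := by positivity
  have hw1 : w < 1 := by rw [hw, div_lt_one (by positivity)]; linarith
  have hw1' : 0 < 1 - w := by linarith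
  have hB' : HT b (((s⁻¹ : ℝ) : ℂ) • B) 1 := by
    have := hs.smul (inv_nonneg.2 h0.le)
    rwa [inv_mul_cancel₀ h0.ne'] at this
  have hwB := hB'.smul hw0.le
  have h2 : HT b (T - (w : ℂ) • ((s⁻¹ : ℝ) : ℂ) • B) (1 - w * 1) := by
    refine hTs.sub hwB fun x => ?_
    rw [qf_smul, qf_smul]
    have h3 := h x
    rw [qf_smul] at h3
    have h4 := qf_nonneg hTs.1 x
    have h5 : w * (s⁻¹ * qf B x) = qf B x / (t + s) := by rw [hw]; field_simp
    rw [h5, div_le_iff₀ (by positivity)]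
    nlinarith
  rw [mul_one] at h2
  have h3 := h2.smul (inv_nonneg.2 hw1'.le)
  rw [inv_mul_cancel₀ hw1'.ne'] at h3
  have h4 := hW.2.2.2 _ _ w (state_iff.2 hB') (state_iff.2 h3) hw0 hw1 (by
    convert hT using 1
    have h6 : (1 - (w : ℂ)) * (((1 - w)⁻¹ : ℝ) : ℂ) = 1 := by
      have : ((1 - w : ℝ) : ℂ) ≠ 0 := by exact_mod_cast hw1'.ne'
      push_cast at this ⊢
      exact mul_inv_cancel₀ this
    rw [smul_smul (1 - (w : ℂ)), h6, one_smul]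
    abel)
  refine ⟨s, h0.le, _, h4.1, ?_⟩
  rw [smul_smul, ← Complex.ofReal_mul, mul_inv_cancel₀ h0.ne']
  simp

theorem mem_of_approx (hW : IsFace b W) {T : H →L[ℂ] H} (hT : HT b T 1)
    (h : ∀ ε : ℝ, 0 < ε → ∃ (A X Y : H →L[ℂ] H) (x y : ℝ), Cn W A ∧ HT b X x ∧ HT b Y y ∧
      x + y ≤ ε ∧ A + Y = T + X) : T ∈ W := by
  have key : ∀ ε : ℝ, 0 < ε → ε < 1 → ∃ u ∈ W, traceNormAlong b (u - T) ≤ 2 * ε := by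
    intro ε hε hε1
    obtain ⟨A, X, Y, x, y, hA, hX, hY, hxy, he⟩ := h ε hε
    obtain ⟨t, ht⟩ := hA.ht hW
    have h1 := ht.add hY
    rw [he] at h1
    have h2 := h1.unique (hT.add hX)
    have hx := hX.nonneg
    have hy := hY.nonneg
    have htp : 0 < t := by linarith
    have hAe : T = A + Y - X := by rw [he]; abel
    refine ⟨_, hA.mem hW ht htp, ?_⟩
    have htt : t⁻¹ * t = 1 := inv_mul_cancel₀ htp.ne'
    rcases le_total t 1 with h3 | h3
    · have h4 : 0 ≤ t⁻¹ - 1 := by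
        have := (one_le_inv₀ htp).2 h3
        linarith
      have h5 := traceNorm_sub_le ((ht.smul h4).add hX) hY
      have h6 : ((t⁻¹ : ℝ) : ℂ) • A - T = ((t⁻¹ - 1 : ℝ) : ℂ) • A + X - Y := by
        rw [hAe]; push_cast; rw [sub_smul, one_smul]; abel
      rw [h6]
      nlinarith
    · have h4 : 0 ≤ 1 - t⁻¹ := by
        have := inv_le_one_of_one_le₀ h3
        linarith
      have h5 := traceNorm_sub_le hX ((ht.smul h4).add hY)
      have h6 : ((t⁻¹ : ℝ) : ℂ) • A - T = X - (((1 - t⁻¹ : ℝ) : ℂ) • A + Y) := by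
        rw [hAe]; push_cast; rw [sub_smul, one_smul]; abel
      rw [h6]
      nlinarith
  have hn : ∀ n : ℕ, ∃ u ∈ W, traceNormAlong b (u - T) ≤ 2 * (1 / ((n : ℝ) + 1) / 2) := by
    intro n
    apply key
    · positivity
    · have : 1 / ((n : ℝ) + 1) ≤ 1 := by
        rw [div_le_one (by positivity)]; linarith [Nat.cast_nonneg (α := ℝ) n]
      linarith
  choose u hu hlim using hn
  refine hW.2.1 T (state_iff.2 hT) u hu ?_
  refine squeeze_zero (fun n => traceNorm_nonneg _) (fun n => (hlim n).trans ?_)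
    tendsto_one_div_add_atTop_nhds_zero_nat
  linarith

theorem rk_add_le (u v x : H) :
    qf (rankOne ℂ (u + v) (u + v)) x ≤
      qf (((2 : ℝ) : ℂ) • (rankOne ℂ u u + rankOne ℂ v v)) x := by
  rw [qf_smul, qf_add, qf_rk, qf_rk, qf_rk, inner_add_left]
  have h1 := norm_add_le ⟪u, x⟫ ⟪v, x⟫
  have h2 := norm_nonneg (⟪u, x⟫ + ⟪v, x⟫)
  nlinarith [sq_nonneg (‖⟪u, x⟫‖ - ‖⟪v, x⟫‖)]

theorem rk_smul (c : ℂ) (v : H) :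
    rankOne ℂ (c • v) (c • v) = ((‖c‖ ^ 2 : ℝ) : ℂ) • rankOne ℂ v v := by
  ext x
  simp only [rankOne_apply, inner_smul_left, ContinuousLinearMap.smul_apply, smul_smul]
  congr 1
  push_cast
  rw [← Complex.conj_mul']
  ring

/-- the subspace of a face -/
def faceSub (hW : IsFace b W) (hne : W.Nonempty) : Submodule ℂ H where
  carrier := {v | Cn W (rankOne ℂ v v)}
  zero_mem' := by
    obtain ⟨T, hT⟩ := hne
    exact ⟨0, le_rfl, T, hT, by simp⟩
  add_mem' := by
    intro u v hu hv
    exact ((hu.add hW hv).smul (by norm_num : (0 : ℝ) ≤ 2)).of_le hW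
      (isPositive_rankOne_self _) (rk_add_le u v)
  smul_mem' := by
    intro c v hv
    change Cn W _
    rw [rk_smul]
    exact Cn.smul hv (by positivity)

theorem closed_unit (hW : IsFace b W) (hne : W.Nonempty) {v : H} (hv : ‖v‖ = 1)
    (h : v ∈ (faceSub hW hne).topologicalClosure) : rankOne ℂ v v ∈ W := by
  have hvt := HT.rk b v
  rw [hv, one_pow] at hvt
  refine mem_of_approx hW hvt fun ε hε => ?_
  obtain ⟨s, hs0, hs1, hse⟩ : ∃ s : ℝ, 0 < s ∧ s ≤ 1 ∧ 11 * s ^ 2 ≤ ε := by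
    refine ⟨min 1 (ε / 11), by positivity, min_le_left _ _, ?_⟩
    have h1 : min 1 (ε / 11) ≤ 1 := min_le_left _ _
    have h2 : min 1 (ε / 11) ≤ ε / 11 := min_le_right _ _
    have h3 : 0 < min 1 (ε / 11) := by positivity
    nlinarith
  have h' : v ∈ closure ((faceSub hW hne : Submodule ℂ H) : Set H) := h
  obtain ⟨g, hg, hd⟩ := Metric.mem_closure_iff.1 h' (s ^ 2) (by positivity)
  rw [dist_eq_norm] at hd
  obtain ⟨c, rfl⟩ : ∃ c, v = g + c := ⟨v - g, by abel⟩
  rw [add_sub_cancel_left] at hd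
  have hgn : ‖g‖ ≤ 2 := by
    have : ‖g‖ ≤ ‖g + c‖ + ‖c‖ := by simpa using norm_sub_le (g + c) c
    nlinarith
  have hX := HT.rk b ((s : ℂ) • g - ((s⁻¹ : ℝ) : ℂ) • c)
  have hY := (HT.rk b c).smul (t := 1 + (s⁻¹) ^ 2) (by positivity)
  refine ⟨_, _, _, _, _, Cn.smul (A := rankOne ℂ g g) (t := 1 + s ^ 2) hg (by positivity),
    hX, hY, ?_, ?_⟩
  · have h1 : ‖(s : ℂ) • g - ((s⁻¹ : ℝ) : ℂ) • c‖ ≤ 3 * s := by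
      refine (norm_sub_le _ _).trans ?_
      rw [norm_smul, norm_smul, Complex.norm_real, Complex.norm_real, Real.norm_of_nonneg hs0.le,
        Real.norm_of_nonneg (inv_nonneg.2 hs0.le)]
      have h2 : s⁻¹ * ‖c‖ ≤ s⁻¹ * s ^ 2 := by gcongr
      have h3 : s⁻¹ * s ^ 2 = s := by field_simp
      nlinarith
    have h4 : ‖c‖ ^ 2 ≤ (s ^ 2) ^ 2 := by gcongr
    have h5 : (1 + s⁻¹ ^ 2) * ‖c‖ ^ 2 ≤ (1 + s⁻¹ ^ 2) * (s ^ 2) ^ 2 := by gcongr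
    have h6 : (1 + s⁻¹ ^ 2) * (s ^ 2) ^ 2 = s ^ 4 + s ^ 2 := by field_simp
    have h7 : s ^ 4 ≤ s ^ 2 := pow_le_pow_of_le_one hs0.le hs1 (by norm_num)
    have h8 : ‖(s : ℂ) • g - ((s⁻¹ : ℝ) : ℂ) • c‖ ^ 2 ≤ (3 * s) ^ 2 := by gcongr
    nlinarith
  · have hsc : (s : ℂ) ≠ 0 := by exact_mod_cast hs0.ne'
    ext x
    simp only [ContinuousLinearMap.add_apply, ContinuousLinearMap.smul_apply, rankOne_apply,
      inner_add_left, inner_sub_left, inner_smul_left, Complex.conj_ofReal]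
    push_cast
    match_scalars <;> field_simp <;> ring

theorem faceSub_closed (hW : IsFace b W) (hne : W.Nonempty) {v : H}
    (h : v ∈ (faceSub hW hne).topologicalClosure) : v ∈ faceSub hW hne := by
  by_cases hv : v = 0
  · rw [hv]; exact zero_mem _
  have h1 := Submodule.smul_mem _ ((‖v‖⁻¹ : ℝ) : ℂ) h
  have hn : ‖v‖ ≠ 0 := by simpa using hv
  have h2 := closed_unit hW hne (by
    rw [norm_smul, Complex.norm_real, norm_inv, norm_norm, inv_mul_cancel₀ hn]) h1
  have h3 : ((‖v‖⁻¹ : ℝ) : ℂ) • v ∈ faceSub hW hne :=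
    ⟨1, zero_le_one, _, h2, by simp⟩
  have h4 := Submodule.smul_mem _ (‖v‖ : ℂ) h3
  rwa [smul_smul, ← Complex.ofReal_mul, mul_inv_cancel₀ hn, Complex.ofReal_one, one_smul] at h4

theorem range_mem (hW : IsFace b W) (hne : W.Nonempty) {T : H →L[ℂ] H} (hT : T ∈ W) (x : H) :
    T x ∈ faceSub hW hne := by
  have hTp := (state_iff.1 (hW.1 T hT)).1
  have hC : Cn W ((qf T x : ℂ) • T) := ⟨_, qf_nonneg hTp x, T, hT, rfl⟩
  refine hC.of_le hW (isPositive_rankOne_self _) fun y => ?_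
  rw [qf_rk, qf_smul]
  exact cs hTp x y

theorem mem_of_range (hW : IsFace b W) (hne : W.Nonempty) {T : H →L[ℂ] H} (hT : HT b T 1)
    (h : ∀ x, T x ∈ faceSub hW hne) : T ∈ W := by
  set R := CFC.sqrt T with hR
  have hRR : ∀ x, R (R x) = T x := fun x => DFunLike.congr_fun (sqrt_mul hT.1) x
  have hRp : R.IsPositive := sqrt_pos T
  have hcl : IsClosed ((faceSub hW hne : Submodule ℂ H) : Set H) := by
    exact closure_subset_iff_isClosed.1 fun v hv => faceSub_closed hW hne hv
  have : CompleteSpace (faceSub hW hne) := hcl.completeSpace_coe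
  have hRm : ∀ x, R x ∈ faceSub hW hne := by
    intro x
    rw [← Submodule.orthogonal_orthogonal (faceSub hW hne), Submodule.mem_orthogonal]
    intro u hu
    have h1 : qf T u = 0 := by
      rw [qf, Submodule.inner_left_of_mem_orthogonal (h u) hu]; rfl
    rw [qf_eq_norm_sqrt hT.1] at h1
    have h2 : R u = 0 := by simpa using h1
    rw [← hRp.inner_left_eq_inner_right, h2, inner_zero_left]
  refine mem_of_approx hW hT fun ε hε => ?_
  obtain ⟨F, hF⟩ := (hT.2.eventually (lt_mem_nhds (show 1 - ε < 1 by linarith))).exists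
  let f : ι → H := fun i => R (b i)
  have hA : Cn W (∑ i ∈ F, rankOne ℂ (f i) (f i)) ∧
      HT b (∑ i ∈ F, rankOne ℂ (f i) (f i)) (∑ i ∈ F, qf T (b i)) := by
    clear hF
    classical
    induction F using Finset.induction_on with
    | empty =>
      obtain ⟨S, hS⟩ := hne
      exact ⟨⟨0, le_rfl, S, hS, by simp⟩, by simpa using HT.zero b⟩
    | insert a F ha ih =>
      rw [Finset.sum_insert ha, Finset.sum_insert ha]
      refine ⟨Cn.add hW (hRm (b a)) ih.1, HT.add ?_ ih.2⟩
      rw [qf_eq_norm_sqrt hT.1]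
      exact HT.rk b (f a)
  have hY := hT.sub hA.2 (fun x => by
    rw [qf_sum, qf_eq_norm_sqrt hT.1, ← hR]
    have h3 := parseval b (R x)
    refine le_trans (le_of_eq ?_) (sum_le_hasSum F (fun i _ => by positivity) h3)
    refine Finset.sum_congr rfl fun i _ => ?_
    rw [qf_rk, norm_inner_symm, ← hRp.inner_left_eq_inner_right])
  refine ⟨_, 0, _, 0, _, hA.1, HT.zero b, hY, by linarith, by abel⟩

theorem rk_proj {P : H →L[ℂ] H} (hP : IsSelfAdjoint P) (v : H) :
    P * rankOne ℂ v v * P = rankOne ℂ (P v) (P v) := by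
  ext x
  simp only [rankOne_apply, ContinuousLinearMap.mul_apply, map_smul]
  rw [← ContinuousLinearMap.adjoint_inner_left]
  rw [show ContinuousLinearMap.adjoint P = P from hP]

theorem le_of_sub {P P' : H →L[ℂ] H} (hP : IsSelfAdjoint P) (hPi : IsIdempotentElem P)
    (hP' : IsSelfAdjoint P') (hPi' : IsIdempotentElem P')
    (h : {T | IsStateOperator b T ∧ P' * T * P' = T} ⊆ {T | IsStateOperator b T ∧ P * T * P = T}) :
    P' ≤ P := by
  have hs : IsStarProjection P := ⟨hPi, hP⟩
  have hs' : IsStarProjection P' := ⟨hPi', hP'⟩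
  rw [hs'.le_iff_mul_eq_right hs]
  ext x
  have hu : ∀ v : H, ‖v‖ = 1 → P' v = v → P v = v := by
    intro v hv hv'
    have h1 := HT.rk b v
    rw [hv, one_pow] at h1
    have h2 := (h ⟨state_iff.2 h1, by rw [rk_proj hP', hv']⟩).2
    have h3 : P (rankOne ℂ v v (P v)) = rankOne ℂ v v v := DFunLike.congr_fun h2 v
    have h4 : rankOne ℂ v v v = v := by
      rw [rankOne_apply, inner_self_eq_norm_sq_to_K, hv]; simp
    rw [h4] at h3
    rw [← h3]
    exact DFunLike.congr_fun hPi _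
  change P (P' x) = P' x
  by_cases h0 : P' x = 0
  · rw [h0, map_zero]
  have hn : ‖P' x‖ ≠ 0 := by simpa using h0
  have := hu (((‖P' x‖⁻¹ : ℝ) : ℂ) • P' x) (by
    rw [norm_smul, Complex.norm_real, norm_inv, norm_norm, inv_mul_cancel₀ hn]) (by
    rw [map_smul]; congr 1; exact DFunLike.congr_fun hPi' x)
  rw [map_smul] at this
  exact smul_right_injective H (by simpa using h0) this

theorem sub_of_le {P P' : H →L[ℂ] H} (hP : IsSelfAdjoint P) (hPi : IsIdempotentElem P)
    (hP' : IsSelfAdjoint P') (hPi' : IsIdempotentElem P') (hle : P' ≤ P) :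
    {T | IsStateOperator b T ∧ P' * T * P' = T} ⊆
      {T | IsStateOperator b T ∧ P * T * P = T} := by
  have hs : IsStarProjection P := ⟨hPi, hP⟩
  have hs' : IsStarProjection P' := ⟨hPi', hP'⟩
  have h1 := (hs'.le_iff_mul_eq_right hs).1 hle
  have h2 := (hs'.le_iff_mul_eq_left hs).1 hle
  rintro T ⟨hT, hT'⟩
  refine ⟨hT, ?_⟩
  rw [← hT']
  calc P * (P' * T * P') * P = (P * P') * T * (P' * P) := by noncomm_ring
    _ = _ := by rw [h1, h2]

theorem exists_proj (hW : IsFace b W) (hne : W.Nonempty) :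
    ∃ P : H →L[ℂ] H, (IsSelfAdjoint P ∧ IsIdempotentElem P) ∧
        W = {T | IsStateOperator b T ∧ P * T * P = T} := by
  have hcl : IsClosed ((faceSub hW hne : Submodule ℂ H) : Set H) := by
    exact closure_subset_iff_isClosed.1 fun v hv => faceSub_closed hW hne hv
  have : CompleteSpace (faceSub hW hne) := hcl.completeSpace_coe
  have hE : IsStarProjection (faceSub hW hne).starProjection := isStarProjection_starProjection
  refine ⟨(faceSub hW hne).starProjection, ⟨hE.isSelfAdjoint, hE.isIdempotentElem⟩, ?_⟩
  ext T
  constructor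
  · intro hT
    have hTs := hW.1 T hT
    refine ⟨hTs, ?_⟩
    have h1 : (faceSub hW hne).starProjection * T = T := by
      ext x
      exact Submodule.starProjection_eq_self_iff.2 (range_mem hW hne hT x)
    have h2 := congrArg star h1
    rw [star_mul, hE.isSelfAdjoint.star_eq, hTs.1.isSelfAdjoint.star_eq] at h2
    rw [h1, h2]
  · rintro ⟨hT, hT'⟩
    refine mem_of_range hW hne (state_iff.1 hT) fun x => ?_
    rw [← hT']
    exact Submodule.starProjection_apply_mem _ _

end
end FaceProj

/-- every nonempty face of the set of state operators corresponds to a unique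
orthogonal projection `P` via `W = {T | P T P = T}`, and this correspondence is an order
isomorphism with respect to inclusion of faces and the Loewner order of projections. -/
theorem face_projection_order_isomorphism
    {H : Type*} [NormedAddCommGroup H] [InnerProductSpace ℂ H] [CompleteSpace H]
    {ι : Type*} [Countable ι] (b : HilbertBasis ι ℂ H) :
    (∀ W : Set (H →L[ℂ] H), IsFace b W → W.Nonempty →
      ∃! P : H →L[ℂ] H, (IsSelfAdjoint P ∧ IsIdempotentElem P) ∧
        W = {T | IsStateOperator b T ∧ P * T * P = T}) ∧
    (∀ (W W' : Set (H →L[ℂ] H)) (P P' : H →L[ℂ] H),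
      IsFace b W → W.Nonempty → IsFace b W' → W'.Nonempty →
      IsSelfAdjoint P → IsIdempotentElem P →
      W = {T | IsStateOperator b T ∧ P * T * P = T} →
      IsSelfAdjoint P' → IsIdempotentElem P' →
      W' = {T | IsStateOperator b T ∧ P' * T * P' = T} →
      (W' ⊆ W ↔ P' ≤ P)) := by

  refine ⟨fun W hW hne => ?_, ?_⟩
  · obtain ⟨P, hP, hWP⟩ := FaceProj.exists_proj hW hne
    refine ⟨P, ⟨hP, hWP⟩, ?_⟩
    rintro Q ⟨hQ, hWQ⟩
    refine le_antisymm (FaceProj.le_of_sub (b := b) hP.1 hP.2 hQ.1 hQ.2 ?_)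
      (FaceProj.le_of_sub (b := b) hQ.1 hQ.2 hP.1 hP.2 ?_)
    · rw [← hWP, ← hWQ]
    · rw [← hWP, ← hWQ]
  · intro W W' P P' _ _ _ _ hP hPi hW hP' hPi' hW'
    rw [hW, hW']
    exact ⟨FaceProj.le_of_sub hP hPi hP' hPi', FaceProj.sub_of_le hP hPi hP' hPi'⟩
end

section
/- Let H be a complex separable Hilbert space, let T be a state operator on H and let E be an effect on H. Then tr[T E] = 1 if and only if E T = T. -/
open scoped ComplexInnerProductSpace

/-- An effect: a bounded self-adjoint operator `E` with `0 ≤ E ≤ 1`. -/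
def IsEffect {H : Type*} [NormedAddCommGroup H] [InnerProductSpace ℂ H]
    [CompleteSpace H] (E : H →L[ℂ] H) : Prop :=
  E.IsPositive ∧ (1 - E).IsPositive

theorem aux_parseval {H : Type*} [NormedAddCommGroup H] [InnerProductSpace ℂ H]
    {ι : Type*} (b : HilbertBasis ι ℂ H) (x : H) :
    HasSum (fun j => ‖⟪b j, x⟫‖ ^ 2) (‖x‖ ^ 2) := by
  have h := Complex.hasSum_re (b.hasSum_inner_mul_inner x x)
  have h1 : (⟪x, x⟫ : ℂ).re = ‖x‖ ^ 2 := by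
    rw [inner_self_eq_norm_sq_to_K]; norm_cast
  rw [h1] at h
  convert h using 2 with j
  rw [← inner_conj_symm x (b j), ← Complex.normSq_eq_conj_mul_self, Complex.ofReal_re,
    Complex.normSq_eq_norm_sq]

theorem aux_ennreal {H : Type*} [NormedAddCommGroup H] [InnerProductSpace ℂ H]
    [CompleteSpace H] {ι : Type*} (b : HilbertBasis ι ℂ H) (A : H →L[ℂ] H) :
    ∑' i, ENNReal.ofReal (‖A (b i)‖ ^ 2) = ∑' i, ENNReal.ofReal (‖A.adjoint (b i)‖ ^ 2) := by
  have key : ∀ x : H, ENNReal.ofReal (‖x‖ ^ 2) = ∑' j, ENNReal.ofReal (‖⟪b j, x⟫‖ ^ 2) := by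
    intro x
    rw [← (aux_parseval b x).tsum_eq,
      ENNReal.ofReal_tsum_of_nonneg (fun _ => by positivity) (aux_parseval b x).summable]
  simp_rw [key]
  rw [ENNReal.tsum_comm]
  refine tsum_congr fun i => tsum_congr fun j => ?_
  rw [ContinuousLinearMap.adjoint_inner_right, norm_inner_symm]

theorem aux_hasSum {H : Type*} [NormedAddCommGroup H] [InnerProductSpace ℂ H]
    [CompleteSpace H] {ι : Type*} (b : HilbertBasis ι ℂ H) (A : H →L[ℂ] H) {c : ℝ}
    (h : HasSum (fun i => ‖A (b i)‖ ^ 2) c) :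
    HasSum (fun i => ‖A.adjoint (b i)‖ ^ 2) c := by
  have h0 : 0 ≤ c := h.nonneg fun _ => by positivity
  have h1 := ENNReal.ofReal_tsum_of_nonneg (fun i => by positivity) h.summable
  rw [h.tsum_eq, aux_ennreal] at h1
  have h2 := ENNReal.hasSum_toReal (f := fun i => ENNReal.ofReal (‖A.adjoint (b i)‖ ^ 2))
    (by rw [← h1]; exact ENNReal.ofReal_ne_top)
  rw [← ENNReal.tsum_toReal_eq (fun _ => ENNReal.ofReal_ne_top), ← h1,
    ENNReal.toReal_ofReal h0] at h2
  convert h2 using 2 with i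
  rw [ENNReal.toReal_ofReal (by positivity)]

theorem aux_sqrt {H : Type*} [NormedAddCommGroup H] [InnerProductSpace ℂ H]
    [CompleteSpace H] (A : H →L[ℂ] H) (hA : A.IsPositive) :
    ∃ S : H →L[ℂ] H, S.adjoint = S ∧ S * S = A := by
  have h0 : 0 ≤ A := (ContinuousLinearMap.nonneg_iff_isPositive A).2 hA
  refine ⟨CFC.sqrt A, ?_, CFC.sqrt_mul_sqrt_self A h0⟩
  exact ((ContinuousLinearMap.nonneg_iff_isPositive _).1 (CFC.sqrt_nonneg A)).isSelfAdjoint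

theorem aux_inner {H : Type*} [NormedAddCommGroup H] [InnerProductSpace ℂ H]
    [CompleteSpace H] (S : H →L[ℂ] H) (hS : S.adjoint = S) (x y : H) :
    ⟪x, S y⟫ = ⟪S x, y⟫ := by
  rw [← ContinuousLinearMap.adjoint_inner_right, hS]

theorem aux_self {H : Type*} [NormedAddCommGroup H] [InnerProductSpace ℂ H] (x : H) :
    (⟪x, x⟫ : ℂ).re = ‖x‖ ^ 2 := by
  rw [inner_self_eq_norm_sq_to_K]; norm_cast

theorem aux_polar {H : Type*} [NormedAddCommGroup H] [InnerProductSpace ℂ H] (x y : H) :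
    (⟪x, y⟫ : ℂ).re = (‖x + y‖ ^ 2 - ‖x - y‖ ^ 2) / 4 := by
  have h1 := norm_add_sq (𝕜 := ℂ) x y
  have h2 := norm_sub_sq (𝕜 := ℂ) x y
  simp only [RCLike.re_eq_complex_re] at h1 h2
  rw [h1, h2]; ring

theorem aux_congr {ι : Type*} {f g : ι → ℝ} {c : ℝ} (h : ∀ i, f i = g i) :
    HasSum f c ↔ HasSum g c := by
  rw [funext h]

/-- for a state operator `T` and an effect `E`,
`tr[TE] = 1` iff `E T = T`. -/
theorem trace_eq_one_iff_effect_fixes_state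
    {H : Type*} [NormedAddCommGroup H] [InnerProductSpace ℂ H] [CompleteSpace H]
    {ι : Type*} [Countable ι] (b : HilbertBasis ι ℂ H)
    (T E : H →L[ℂ] H) (hT : IsStateOperator b T) (hE : IsEffect E) :
    trAlong b (T * E) = 1 ↔ E * T = T := by
  obtain ⟨hTp, hTs, hT1⟩ := hT
  obtain ⟨hEp, hFp⟩ := hE
  have hTa : T.adjoint = T := hTp.isSelfAdjoint
  have hEa : E.adjoint = E := hEp.isSelfAdjoint
  constructor
  · intro h
    obtain ⟨S, hSa, hSS⟩ := aux_sqrt T hTp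
    obtain ⟨R, hRa, hRR⟩ := aux_sqrt (1 - E) hFp
    have hsum : Summable (fun i => ⟪b i, (T * E) (b i)⟫) := by
      by_contra hn
      rw [trAlong, tsum_eq_zero_of_not_summable hn] at h
      exact zero_ne_one h
    have h1 : HasSum (fun i => (⟪b i, (T * E) (b i)⟫ : ℂ).re) 1 := by
      have := hsum.hasSum
      rw [show ∑' i, ⟪b i, (T * E) (b i)⟫ = 1 from h] at this
      simpa using Complex.hasSum_re this
    have h2 : HasSum (fun i => ‖S (b i)‖ ^ 2) 1 := by
      have := hTs.hasSum
      rw [show ∑' i, ⟪b i, T (b i)⟫ = 1 from hT1] at this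
      have := Complex.hasSum_re this
      rw [Complex.one_re] at this
      refine (aux_congr fun i => ?_).2 this
      rw [← hSS, mul_apply_eq_comp, aux_inner S hSa, aux_self]
    have hb : ∀ B : H →L[ℂ] H, Summable (fun i => ‖(B * S) (b i)‖ ^ 2) := by
      intro B
      refine Summable.of_nonneg_of_le (fun _ => by positivity) (fun i => ?_)
        (h2.summable.mul_left (‖B‖ ^ 2))
      rw [← mul_pow]
      gcongr
      exact B.le_opNorm _
    have hswap : ∀ B : H →L[ℂ] H, B.adjoint = B →
        HasSum (fun i => ‖(S * B) (b i)‖ ^ 2) (∑' i, ‖(B * S) (b i)‖ ^ 2) := by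
      intro B hB
      have := aux_hasSum b (B * S) (hb B).hasSum
      rwa [show (B * S).adjoint = S * B by
        rw [ContinuousLinearMap.mul_def, ContinuousLinearMap.adjoint_comp, hB, hSa]; rfl] at this
    have hone : (1 : H →L[ℂ] H).adjoint = 1 := star_one _
    have hp := hswap (1 + E) (by rw [map_add, hone, hEa])
    have hm := hswap (1 - E) (by rw [map_sub, hone, hEa])
    have h3 : HasSum (fun i => (⟪b i, (T * E) (b i)⟫ : ℂ).re)
        ((∑' i, ‖((1 + E) * S) (b i)‖ ^ 2 - ∑' i, ‖((1 - E) * S) (b i)‖ ^ 2) / 4) := by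
      refine (aux_congr fun i => ?_).2 ((hp.sub hm).div_const 4)
      rw [← hSS, mul_assoc, mul_apply_eq_comp, aux_inner S hSa, aux_polar]
      simp
    have h4 : HasSum (fun i => (⟪S (b i), E (S (b i))⟫ : ℂ).re)
        ((∑' i, ‖((1 + E) * S) (b i)‖ ^ 2 - ∑' i, ‖((1 - E) * S) (b i)‖ ^ 2) / 4) := by
      refine (aux_congr fun i => ?_).2
        (((hb (1 + E)).hasSum.sub (hb (1 - E)).hasSum).div_const 4)
      simp [aux_polar]
    rw [← h1.unique h3] at h4
    have h5 : HasSum (fun i => ‖R (S (b i))‖ ^ 2) 0 := by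
      have h24 := h2.sub h4
      rw [sub_self] at h24
      refine (aux_congr fun i => ?_).2 h24
      rw [← aux_self, ← aux_inner R hRa, ← aux_self, ← mul_apply_eq_comp R R, hRR]
      simp [inner_sub_right]
    have h6 := (hasSum_zero_iff_of_nonneg (fun i => by positivity)).1 h5
    have h7 : R * S = 0 := by
      refine ContinuousLinearMap.ext_on
        (Submodule.dense_iff_topologicalClosure_eq_top.2 b.dense_span) ?_
      rintro _ ⟨i, rfl⟩
      have := congrFun h6 i
      simpa using this
    have h8 : (1 - E) * T = 0 := by
      rw [← hRR, ← hSS, mul_assoc, ← mul_assoc R S S, h7, zero_mul, mul_zero]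
    rw [sub_mul, one_mul, sub_eq_zero] at h8
    exact h8.symm
  · intro h
    have : T * E = T := by
      have := congrArg star h
      rw [star_mul] at this
      rwa [show star T = T from hTa, show star E = E from hEa] at this
    rw [this, hT1]
end

section
/- Subadditivity of von Neumann entropy: let T be a density matrix on the bipartite space ℂ^m ⊗ ℂ^n (i.e., a positive-semidefinite Hermitian matrix of trace 1 indexed by pairs (i,k) with i ∈ {1,…,m}, k ∈ {1,…,n}), and let T₁ and T₂ be its partial traces, T₁(i,j) = Σ_k T((i,k),(j,k)) and T₂(k,l) = Σ_i T((i,k),(i,l)). Then S(T) ≤ S(T₁) + S(T₂), and equality holds if and only if T = T₁ ⊗ T₂ (the Kronecker product). -/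
open scoped Kronecker ComplexOrder

/-- The von Neumann entropy `S(T) = −Σᵢ λᵢ ln λᵢ` of a Hermitian matrix, computed from its
eigenvalues (with the convention `0 ln 0 = 0`, automatic since `Real.log 0 = 0`). -/
noncomputable def vnEntropy {n : Type*} [Fintype n] [DecidableEq n]
    {A : Matrix n n ℂ} (hA : A.IsHermitian) : ℝ :=
  -∑ i, hA.eigenvalues i * Real.log (hA.eigenvalues i)


lemma klein_term {p s c : ℝ} (hp : 0 ≤ p) (hs : 0 ≤ s) (hc : 0 ≤ c) (h0 : s = 0 → p * c = 0) :
    0 ≤ c * (p * Real.log p - p * Real.log s - p + s) ∧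
    (c * (p * Real.log p - p * Real.log s - p + s) = 0 ↔ (c ≠ 0 → p = s)) := by
  rcases hc.eq_or_lt with rfl | hc
  · simp
  have key : 0 ≤ p * Real.log p - p * Real.log s - p + s ∧
      (p * Real.log p - p * Real.log s - p + s = 0 ↔ p = s) := by
    rcases hp.eq_or_lt with rfl | hp
    · simp [hs, eq_comm]
    rcases hs.eq_or_lt with rfl | hs
    · have := h0 rfl
      have : 0 < p * c := by positivity
      linarith
    have e : p * Real.log p - p * Real.log s - p + s = p * (s / p - 1 - Real.log (s / p)) := by
      rw [Real.log_div hs.ne' hp.ne']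
      field_simp
      ring
    have hsp : 0 < s / p := by positivity
    refine ⟨?_, ?_, ?_⟩
    · rw [e]
      have := Real.log_le_sub_one_of_pos hsp
      exact mul_nonneg hp.le (by linarith)
    · intro h
      by_contra hne
      have h1 : s / p ≠ 1 := by
        intro h1
        rw [div_eq_one_iff_eq hp.ne'] at h1
        exact hne h1.symm
      have := Real.log_lt_sub_one_of_pos hsp h1
      have : 0 < p * (s / p - 1 - Real.log (s / p)) := mul_pos hp (by linarith)
      linarith
    · rintro rfl
      ring
  refine ⟨mul_nonneg hc.le key.1, ?_⟩
  simp [hc.ne', key.2]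

lemma real_subadd {α ι κ : Type*} [Fintype α] [Fintype ι] [Fintype κ]
    (p : α → ℝ) (q : ι → ℝ) (r : κ → ℝ) (c : α → ι × κ → ℝ)
    (hp : ∀ a, 0 ≤ p a) (hc : ∀ a b, 0 ≤ c a b) (hp1 : ∑ a, p a = 1)
    (hrow : ∀ a, ∑ b, c a b = 1) (hcol : ∀ b, ∑ a, c a b = 1)
    (hq : ∀ i, ∑ k, ∑ a, p a * c a (i, k) = q i)
    (hr : ∀ k, ∑ i, ∑ a, p a * c a (i, k) = r k) :
    (-∑ a, p a * Real.log (p a) ≤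
      -(∑ i, q i * Real.log (q i)) + -(∑ k, r k * Real.log (r k))) ∧
    ((-∑ a, p a * Real.log (p a) =
      -(∑ i, q i * Real.log (q i)) + -(∑ k, r k * Real.log (r k))) ↔
      ∀ a b, c a b ≠ 0 → p a = q b.1 * r b.2) := by
  have hpc : ∀ a b, 0 ≤ p a * c a b := fun a b => mul_nonneg (hp a) (hc a b)
  have ht : ∀ b, 0 ≤ ∑ a, p a * c a b := fun b => Finset.sum_nonneg fun a _ => hpc a b
  have hq0 : ∀ i, 0 ≤ q i := fun i => by rw [← hq]; exact Finset.sum_nonneg fun k _ => ht _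
  have hr0 : ∀ i, 0 ≤ r i := fun i => by rw [← hr]; exact Finset.sum_nonneg fun k _ => ht _
  have hqz : ∀ i k, q i = 0 → ∀ a, p a * c a (i, k) = 0 := by
    intro i k h a
    rw [← hq, Finset.sum_eq_zero_iff_of_nonneg (fun k _ => ht _)] at h
    have h := h k (Finset.mem_univ _)
    rw [Finset.sum_eq_zero_iff_of_nonneg (fun a _ => hpc _ _)] at h
    exact h a (Finset.mem_univ _)
  have hrz : ∀ i k, r k = 0 → ∀ a, p a * c a (i, k) = 0 := by
    intro i k h a
    rw [← hr, Finset.sum_eq_zero_iff_of_nonneg (fun k _ => ht _)] at h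
    have h := h i (Finset.mem_univ _)
    rw [Finset.sum_eq_zero_iff_of_nonneg (fun a _ => hpc _ _)] at h
    exact h a (Finset.mem_univ _)
  have kt := fun a (b : ι × κ) => klein_term (hp a) (mul_nonneg (hq0 b.1) (hr0 b.2)) (hc a b)
    (fun h => by
      rcases mul_eq_zero.1 h with h | h
      · exact hqz b.1 b.2 h a
      · exact hrz b.1 b.2 h a)
  have hq1 : ∑ i, q i = 1 := by
    simp_rw [← hq]
    rw [← Fintype.sum_prod_type' (f := fun i k => ∑ a, p a * c a (i, k)), Finset.sum_comm]
    simp_rw [← Finset.mul_sum]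
    simp [hrow, hp1]
  have hr1 : ∑ i, r i = 1 := by
    simp_rw [← hr]
    rw [Finset.sum_comm, ← Fintype.sum_prod_type' (f := fun i k => ∑ a, p a * c a (i, k)),
      Finset.sum_comm]
    simp_rw [← Finset.mul_sum]
    simp [hrow, hp1]
  have A1 : ∑ a, ∑ b, c a b * (p a * Real.log (p a)) = ∑ a, p a * Real.log (p a) := by
    simp_rw [← Finset.sum_mul, hrow, one_mul]
  have A3 : ∑ a, ∑ b, c a b * p a = 1 := by
    simp_rw [← Finset.sum_mul, hrow, one_mul, hp1]
  have A4 : ∑ a, ∑ b : ι × κ, c a b * (q b.1 * r b.2) = 1 := by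
    rw [Finset.sum_comm]
    simp_rw [← Finset.sum_mul, hcol, one_mul]
    rw [Fintype.sum_prod_type]
    simp_rw [← Finset.mul_sum, hr1, mul_one, hq1]
  have A2 : ∑ a, ∑ b : ι × κ, c a b * (p a * Real.log (q b.1 * r b.2)) =
      ∑ i, q i * Real.log (q i) + ∑ k, r k * Real.log (r k) := by
    have e : ∀ a (b : ι × κ), c a b * (p a * Real.log (q b.1 * r b.2)) =
        p a * c a b * Real.log (q b.1) + p a * c a b * Real.log (r b.2) := by
      intro a b
      by_cases h1 : q b.1 = 0
      · have := hqz b.1 b.2 h1 a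
        linear_combination (Real.log (q b.1 * r b.2) - Real.log (q b.1) - Real.log (r b.2)) * this
      by_cases h2 : r b.2 = 0
      · have := hrz b.1 b.2 h2 a
        linear_combination (Real.log (q b.1 * r b.2) - Real.log (q b.1) - Real.log (r b.2)) * this
      rw [Real.log_mul h1 h2]; ring
    simp_rw [e, Finset.sum_add_distrib]
    congr 1
    · rw [Finset.sum_comm, Fintype.sum_prod_type]
      simp_rw [← Finset.sum_mul, hq]
    · rw [Finset.sum_comm, Fintype.sum_prod_type, Finset.sum_comm]
      simp_rw [← Finset.sum_mul, hr]
  have total : ∑ a, ∑ b : ι × κ, c a b *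
      (p a * Real.log (p a) - p a * Real.log (q b.1 * r b.2) - p a + q b.1 * r b.2) =
      ∑ a, p a * Real.log (p a) - (∑ i, q i * Real.log (q i) + ∑ k, r k * Real.log (r k)) := by
    simp_rw [mul_add, mul_sub, Finset.sum_add_distrib, Finset.sum_sub_distrib]
    rw [A1, A2, A3, A4]; ring
  have nn := fun a => Finset.sum_nonneg (s := Finset.univ) fun b _ => (kt a b).1
  have n2 := Finset.sum_nonneg (s := Finset.univ) fun a _ => nn a
  constructor
  · linarith
  · have : (∀ a b, c a b ≠ 0 → p a = q b.1 * r b.2) ↔ ∑ a, ∑ b : ι × κ, c a b *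
      (p a * Real.log (p a) - p a * Real.log (q b.1 * r b.2) - p a + q b.1 * r b.2) = 0 := by
      rw [Finset.sum_eq_zero_iff_of_nonneg (fun a _ => nn a)]
      simp_rw [Finset.sum_eq_zero_iff_of_nonneg (fun b _ => (kt _ b).1)]
      simp only [Finset.mem_univ, forall_const, (kt _ _).2]
    rw [this, total]
    constructor <;> intro h <;> linarith

open Matrix in
lemma ptrace₁ {ι κ : Type*} [Fintype ι] [Fintype κ] [DecidableEq κ]
    (T : Matrix (ι × κ) (ι × κ) ℂ) (A : Matrix ι ι ℂ) (B : Matrix κ κ ℂ) (hB : B * Bᴴ = 1)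
    (T₁ : Matrix ι ι ℂ) (h : ∀ i j, T₁ i j = ∑ k, T (i, k) (j, k)) (i : ι) :
    ∑ k, ((A ⊗ₖ B)ᴴ * T * A ⊗ₖ B) (i, k) (i, k) = (Aᴴ * T₁ * A) i i := by
  have hB' : ∀ y y', ∑ k, B y k * star (B y' k) = if y = y' then 1 else 0 := by
    intro y y'
    have := congrFun (congrFun hB y) y'
    simpa [Matrix.mul_apply, Matrix.one_apply] using this
  simp only [Matrix.mul_apply, Matrix.conjTranspose_apply, Matrix.kronecker_apply, star_mul',
    Finset.sum_mul, h, Finset.mul_sum, Fintype.sum_prod_type]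
  rw [Finset.sum_comm]
  refine Finset.sum_congr rfl fun x _ => ?_
  rw [Finset.sum_comm]
  have : ∀ y, ∑ k, ∑ x', ∑ y', star (A x' i) * star (B y' k) * T (x', y') (x, y) * (A x i * B y k)
      = ∑ x', star (A x' i) * T (x', y) (x, y) * A x i := by
    intro y
    rw [Finset.sum_comm]
    refine Finset.sum_congr rfl fun x' _ => ?_
    rw [Finset.sum_comm]
    have : ∀ y', ∑ k, star (A x' i) * star (B y' k) * T (x', y') (x, y) * (A x i * B y k)
      = star (A x' i) * T (x', y') (x, y) * A x i * ∑ k, B y k * star (B y' k) := by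
      intro y'
      rw [Finset.mul_sum]
      exact Finset.sum_congr rfl fun _ _ => by ring
    simp_rw [this, hB']
    simp
  simp_rw [this]
  rw [Finset.sum_comm]

open Matrix in
lemma ptrace₂ {ι κ : Type*} [Fintype ι] [Fintype κ] [DecidableEq ι]
    (T : Matrix (ι × κ) (ι × κ) ℂ) (A : Matrix ι ι ℂ) (B : Matrix κ κ ℂ) (hA : A * Aᴴ = 1)
    (T₂ : Matrix κ κ ℂ) (h : ∀ k l, T₂ k l = ∑ i, T (i, k) (i, l)) (k : κ) :
    ∑ i, ((A ⊗ₖ B)ᴴ * T * A ⊗ₖ B) (i, k) (i, k) = (Bᴴ * T₂ * B) k k := by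
  rw [← ptrace₁ (T.submatrix Prod.swap Prod.swap) B A hA T₂ (by simpa using h) k]
  refine Finset.sum_congr rfl fun i _ => ?_
  simp only [Matrix.mul_apply, Matrix.conjTranspose_apply, Matrix.kronecker_apply, 
    Matrix.submatrix_apply]
  rw [← (Equiv.prodComm ι κ).sum_comp]
  refine Finset.sum_congr rfl fun x _ => ?_
  rw [← (Equiv.prodComm ι κ).sum_comp]
  simp [mul_comm]

open Matrix in
lemma spec_facts {ι : Type*} [Fintype ι] [DecidableEq ι] {A : Matrix ι ι ℂ} (hA : A.IsHermitian) :
    ∃ U : Matrix ι ι ℂ, U * Uᴴ = 1 ∧ Uᴴ * U = 1 ∧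
      A = U * diagonal (fun i => (hA.eigenvalues i : ℂ)) * Uᴴ := by
  refine ⟨hA.eigenvectorUnitary, ?_, ?_, ?_⟩
  · exact Unitary.coe_mul_star_self hA.eigenvectorUnitary
  · exact Unitary.coe_star_mul_self hA.eigenvectorUnitary
  · have := hA.spectral_theorem
    rw [Unitary.conjStarAlgAut_apply] at this
    exact this

open Matrix in
theorem vnEntropy_subadditivity (m n : ℕ)
    (T : Matrix (Fin m × Fin n) (Fin m × Fin n) ℂ)
    (hT : T.PosSemidef) (htrace : T.trace = 1)
    (T₁ : Matrix (Fin m) (Fin m) ℂ) (hT₁def : ∀ i j, T₁ i j = ∑ k, T (i, k) (j, k))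
    (T₂ : Matrix (Fin n) (Fin n) ℂ) (hT₂def : ∀ k l, T₂ k l = ∑ i, T (i, k) (i, l))
    (h₁ : T₁.IsHermitian) (h₂ : T₂.IsHermitian) :
    vnEntropy hT.isHermitian ≤ vnEntropy h₁ + vnEntropy h₂ ∧
    (vnEntropy hT.isHermitian = vnEntropy h₁ + vnEntropy h₂ ↔ T = T₁ ⊗ₖ T₂) := by
  obtain ⟨U, hU, hU', eT⟩ := spec_facts hT.isHermitian
  obtain ⟨A, hA, hA', eA⟩ := spec_facts h₁
  obtain ⟨B, hB, hB', eB⟩ := spec_facts h₂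
  have hp : ∀ a, 0 ≤ hT.isHermitian.eigenvalues a := hT.eigenvalues_nonneg
  have hp1 : ∑ a, hT.isHermitian.eigenvalues a = 1 := by
    have := hT.isHermitian.trace_eq_sum_eigenvalues
    rw [htrace] at this
    have h := congrArg Complex.re this
    simpa using h.symm
  unfold vnEntropy
  generalize hT.isHermitian.eigenvalues = p at *
  generalize h₁.eigenvalues = q at *
  generalize h₂.eigenvalues = r at *
  obtain ⟨W, hWdef⟩ : ∃ W, W = A ⊗ₖ B := ⟨_, rfl⟩
  have hW : W * Wᴴ = 1 := by
    rw [hWdef, conjTranspose_kronecker, ← mul_kronecker_mul, hA, hB, one_kronecker_one]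
  have hW' : Wᴴ * W = 1 := by
    rw [hWdef, conjTranspose_kronecker, ← mul_kronecker_mul, hA', hB', one_kronecker_one]
  have eW : T₁ ⊗ₖ T₂ = W * diagonal (fun b => (q b.1 : ℂ) * (r b.2 : ℂ)) * Wᴴ := by
    rw [eA, eB, mul_kronecker_mul, mul_kronecker_mul, hWdef, conjTranspose_kronecker,
      diagonal_kronecker_diagonal]
  obtain ⟨M, hMdef⟩ : ∃ M, M = Uᴴ * W := ⟨_, rfl⟩
  have hM : M * Mᴴ = 1 := by
    rw [hMdef, conjTranspose_mul, conjTranspose_conjTranspose, Matrix.mul_assoc,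
      ← Matrix.mul_assoc W, hW, Matrix.one_mul, hU']
  have hM' : Mᴴ * M = 1 := by
    rw [hMdef, conjTranspose_mul, conjTranspose_conjTranspose, Matrix.mul_assoc,
      ← Matrix.mul_assoc U, hU, Matrix.one_mul, hW']
  have hWT : Wᴴ * T * W = Mᴴ * diagonal (fun i => (p i : ℂ)) * M := by
    rw [eT, hMdef, conjTranspose_mul, conjTranspose_conjTranspose]
    simp only [Matrix.mul_assoc]
  have hdiag : ∀ b, (Wᴴ * T * W) b b = ((∑ a, p a * Complex.normSq (M a b) : ℝ) : ℂ) := by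
    intro b
    rw [hWT, Matrix.mul_apply]
    push_cast
    refine Finset.sum_congr rfl fun a _ => ?_
    rw [mul_diagonal, conjTranspose_apply, Complex.normSq_eq_conj_mul_self]
    simp only [Complex.star_def]
    ring
  have hq : ∀ i, ∑ k, ∑ a, p a * Complex.normSq (M a (i, k)) = q i := by
    intro i
    have h := ptrace₁ T A B hB T₁ hT₁def i
    rw [← hWdef] at h
    have e : Aᴴ * T₁ * A = diagonal (fun i => (q i : ℂ)) := by
      rw [eA]
      calc _ = (Aᴴ * A) * diagonal (fun i => (q i : ℂ)) * (Aᴴ * A) := by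
            simp only [Matrix.mul_assoc]
        _ = _ := by rw [hA', Matrix.one_mul, Matrix.mul_one]
    rw [e, diagonal_apply_eq] at h
    simp_rw [hdiag] at h
    exact_mod_cast h
  have hr : ∀ k, ∑ i, ∑ a, p a * Complex.normSq (M a (i, k)) = r k := by
    intro k
    have h := ptrace₂ T A B hA T₂ hT₂def k
    rw [← hWdef] at h
    have e : Bᴴ * T₂ * B = diagonal (fun i => (r i : ℂ)) := by
      rw [eB]
      calc _ = (Bᴴ * B) * diagonal (fun i => (r i : ℂ)) * (Bᴴ * B) := by
            simp only [Matrix.mul_assoc]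
        _ = _ := by rw [hB', Matrix.one_mul, Matrix.mul_one]
    rw [e, diagonal_apply_eq] at h
    simp_rw [hdiag] at h
    exact_mod_cast h
  have hrow : ∀ a, ∑ b, Complex.normSq (M a b) = 1 := by
    intro a
    have := congrFun (congrFun hM a) a
    rw [Matrix.mul_apply, one_apply_eq] at this
    simp_rw [conjTranspose_apply, Complex.star_def, Complex.mul_conj] at this
    exact_mod_cast this
  have hcol : ∀ b, ∑ a, Complex.normSq (M a b) = 1 := by
    intro b
    have := congrFun (congrFun hM' b) b
    rw [Matrix.mul_apply, one_apply_eq] at this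
    simp_rw [conjTranspose_apply, Complex.star_def, ← Complex.normSq_eq_conj_mul_self] at this
    exact_mod_cast this
  have main := real_subadd p q r (fun a b => Complex.normSq (M a b)) hp
    (fun a b => Complex.normSq_nonneg _) hp1 hrow hcol hq hr
  refine ⟨main.1, main.2.trans ?_⟩
  have h3 : (∀ a b, Complex.normSq (M a b) ≠ 0 → p a = q b.1 * r b.2) ↔
      diagonal (fun i => (p i : ℂ)) * M =
        M * diagonal (fun b => (q b.1 : ℂ) * (r b.2 : ℂ)) := by
    rw [← Matrix.ext_iff]
    refine forall_congr' fun a => forall_congr' fun b => ?_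
    rw [diagonal_mul, mul_diagonal, mul_comm (p a : ℂ), ← Complex.ofReal_mul, mul_eq_mul_left_iff]
    simp only [ne_eq, Complex.normSq_eq_zero, Complex.ofReal_inj]
    tauto
  refine h3.trans ?_
  rw [eW]
  constructor
  · intro h
    calc T = U * (diagonal (fun i => (p i : ℂ)) * M) * Wᴴ := by
          rw [hMdef, eT]
          simp only [Matrix.mul_assoc, hW, Matrix.mul_one]
      _ = (U * Uᴴ) * W * diagonal (fun b => (q b.1 : ℂ) * (r b.2 : ℂ)) * Wᴴ := by
          rw [h, hMdef]
          simp only [Matrix.mul_assoc]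
      _ = _ := by rw [hU, Matrix.one_mul]
  · intro h
    calc diagonal (fun i => (p i : ℂ)) * M
          = (Uᴴ * U) * diagonal (fun i => (p i : ℂ)) * Uᴴ * W := by
          rw [hU', Matrix.one_mul, hMdef, Matrix.mul_assoc]
      _ = Uᴴ * T * W := by
          rw [eT]
          simp only [Matrix.mul_assoc]
      _ = _ := by
          rw [h, hMdef]
          simp only [Matrix.mul_assoc, hW', Matrix.mul_one]
end
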